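/- For every real number a with a > 0 and a ≠ 1, 16·K₁(a) + 8·K₂(a) = (783 − 784a + a⁴ + 540 log a + 240 a log a + 144 (log a)²)/(18 (log a)⁴), where K₁(a) := ∫_0^1 ∫_{u₁}^1 ∫_{u₂}^1 ∫_{u₃}^1 a^{u₄ − u₃ + u₂ − u₁} du₄ du₃ du₂ du₁ and K₂(a) := ∫_0^1 ∫_{u₁}^1 ∫_{u₃}^1 ∫_{u₂}^1 a^{u₄ − 3u₃ + 3u₂ − u₁} du₄ du₂ du₃ du₁. -/

import Mathlib

open Real MeasureTheory intervalIntegral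


lemma step_aux (L A B C P Q k d m n : ℝ) (b c : ℝ) (g : ℝ → ℝ)
    (hg : ∀ x, g x = (B + L * k * (A + B * x)) * rexp (L * (k * x + d))
      + C * L * m * rexp (L * (m * x + n)) + P + 2 * Q * x) :
    ∫ x in b..c, g x =
      ((A + B * c) * rexp (L * (k * c + d)) + C * rexp (L * (m * c + n)) + P * c + Q * c ^ 2)
      - ((A + B * b) * rexp (L * (k * b + d)) + C * rexp (L * (m * b + n)) + P * b + Q * b ^ 2) := by
  have hE : ∀ k d x : ℝ, HasDerivAt (fun x => rexp (L * (k * x + d)))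
      (rexp (L * (k * x + d)) * (L * (k * 1))) x := fun k d x =>
    ((((hasDerivAt_id x).const_mul k).add_const d).const_mul L).exp
  have hF : ∀ x, HasDerivAt (fun x => (A + B * x) * rexp (L * (k * x + d))
      + C * rexp (L * (m * x + n)) + P * x + Q * x ^ 2) (g x) x := by
    intro x
    have h1 := ((((hasDerivAt_id x).const_mul B).const_add A).mul (hE k d x))
    have h2 := (hE m n x).const_mul C
    have h3 := (hasDerivAt_id x).const_mul P
    have h4 := ((hasDerivAt_id x).pow 2).const_mul Q
    refine (((h1.add h2).add h3).add h4).congr_deriv ?_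
    rw [hg]
    simp
    ring
  have hc : Continuous g := by
    rw [show g = _ from funext hg]
    fun_prop
  exact integral_eq_sub_of_hasDerivAt (fun x _ => hF x) (hc.intervalIntegrable _ _)

/-- Appendix A.3 of the paper: the fourth moment `E[|F₁|⁴] = 16 K₁(a) + 8 K₂(a)`
equals `(783 − 784a + a⁴ + 540 log a + 240a log a + 144 (log a)²)/(18 (log a)⁴)`. -/
theorem fourth_moment_formula (a : ℝ) (ha : 0 < a) (ha1 : a ≠ 1)
    (K₁ K₂ : ℝ)
    (hK₁ : K₁ = ∫ u₁ in (0:ℝ)..1, ∫ u₂ in u₁..1, ∫ u₃ in u₂..1, ∫ u₄ in u₃..1,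
        a ^ (u₄ - u₃ + u₂ - u₁))
    (hK₂ : K₂ = ∫ u₁ in (0:ℝ)..1, ∫ u₃ in u₁..1, ∫ u₂ in u₃..1, ∫ u₄ in u₂..1,
        a ^ (u₄ - 3 * u₃ + 3 * u₂ - u₁)) :
    16 * K₁ + 8 * K₂ =
      (783 - 784 * a + a ^ 4 + 540 * Real.log a + 240 * a * Real.log a +
        144 * (Real.log a) ^ 2) / (18 * (Real.log a) ^ 4) := by
  have hL : Real.log a ≠ 0 := Real.log_ne_zero_of_pos_of_ne_one ha ha1
  simp only [Real.rpow_def_of_pos ha] at hK₁ hK₂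
  have ha' : rexp (Real.log a) = a := Real.exp_log ha
  have ha4 : rexp (Real.log a * 4) = a ^ 4 := by
    rw [mul_comm, show (4:ℝ) = ((4:ℕ):ℝ) by norm_num, Real.exp_nat_mul, ha']
  generalize Real.log a = L at *
  have p1 : ∀ x y z : ℝ, ∫ w in (z:ℝ)..1, (rexp (L * (w-z+y-x))) = (rexp (L * (1-z+y-x)) - rexp (L * (y-x)))/L := by
    intro x y z
    rw [step_aux L (1/L) (0) (0) (0) (0) (1) (-z+y-x) (0) (0) z 1 _ (by
      intro t
      ring_nf
      try field_simp
      try ring_nf)]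
    ring_nf
    try simp only [mul_inv_cancel₀ hL, Real.exp_zero]
    try field_simp
    try ring_nf
    try (simp only [Real.exp_zero]; ring_nf)
  have p2 : ∀ x y : ℝ, ∫ z in (y:ℝ)..1, ((rexp (L * (1-z+y-x)) - rexp (L * (y-x)))/L) = -rexp (L * (y-x))/L^2 - rexp (L * (y-x))/L + rexp (L * (1-x))/L^2 + y*rexp (L * (y-x))/L := by
    intro x y
    rw [step_aux L (-1/L^2) (0) (0) (-rexp (L * (y-x))/L) (0) (-1) (1+y-x) (0) (0) y 1 _ (by
      intro t
      ring_nf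
      try field_simp
      try ring_nf)]
    ring_nf
    try simp only [mul_inv_cancel₀ hL, Real.exp_zero]
    try field_simp
    try ring_nf
    try (simp only [Real.exp_zero]; ring_nf)
  have p3 : ∀ x : ℝ, ∫ y in (x:ℝ)..1, (-rexp (L * (y-x))/L^2 - rexp (L * (y-x))/L + rexp (L * (1-x))/L^2 + y*rexp (L * (y-x))/L) = rexp (L * (1-x))*(1/L^2-2/L^3-x/L^2)+2/L^3+1/L^2-x/L^2 := by
    intro x
    rw [step_aux L (-2/L^3-1/L^2) (1/L^2) (0) (rexp (L * (1-x))/L^2) (0) (1) (-x) (0) (0) x 1 _ (by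
      intro t
      ring_nf
      try field_simp
      try ring_nf)]
    ring_nf
    try simp only [mul_inv_cancel₀ hL, Real.exp_zero]
    try field_simp
    try ring_nf
    try (simp only [Real.exp_zero]; ring_nf)
  have p4 : ∫ x in (0:ℝ)..1, (rexp (L * (1-x))*(1/L^2-2/L^3-x/L^2)+2/L^3+1/L^2-x/L^2) = 3/L^4+2/L^3+1/(2*L^2)+rexp (L * (1))*(1/L^3-3/L^4) := by
    rw [step_aux L (-1/L^3+3/L^4) (1/L^3) (0) (2/L^3+1/L^2) (-1/(2*L^2)) (-1) (1) (0) (0) 0 1 _ (by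
      intro t
      ring_nf
      try field_simp
      try ring_nf)]
    ring_nf
    try simp only [mul_inv_cancel₀ hL, Real.exp_zero]
    try field_simp
    try ring_nf
    try (simp only [Real.exp_zero]; ring_nf)
  have q1 : ∀ x y z : ℝ, ∫ w in (z:ℝ)..1, (rexp (L * (w-3*y+3*z-x))) = (rexp (L * (1-3*y+3*z-x)) - rexp (L * (4*z-3*y-x)))/L := by
    intro x y z
    rw [step_aux L (1/L) (0) (0) (0) (0) (1) (-3*y+3*z-x) (0) (0) z 1 _ (by
      intro t
      ring_nf
      try field_simp
      try ring_nf)]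
    ring_nf
    try simp only [mul_inv_cancel₀ hL, Real.exp_zero]
    try field_simp
    try ring_nf
    try (simp only [Real.exp_zero]; ring_nf)
  have q2 : ∀ x y : ℝ, ∫ z in (y:ℝ)..1, ((rexp (L * (1-3*y+3*z-x)) - rexp (L * (4*z-3*y-x)))/L) = rexp (L * (4-3*y-x))/(12*L^2) - rexp (L * (1-x))/(3*L^2)+rexp (L * (y-x))/(4*L^2) := by
    intro x y
    rw [step_aux L (1/(3*L^2)) (0) (-1/(4*L^2)) (0) (0) (3) (1-3*y-x) (4) (-3*y-x) y 1 _ (by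
      intro t
      ring_nf
      try field_simp
      try ring_nf)]
    ring_nf
    try simp only [mul_inv_cancel₀ hL, Real.exp_zero]
    try field_simp
    try ring_nf
    try (simp only [Real.exp_zero]; ring_nf)
  have q3 : ∀ x : ℝ, ∫ y in (x:ℝ)..1, (rexp (L * (4-3*y-x))/(12*L^2) - rexp (L * (1-x))/(3*L^2)+rexp (L * (y-x))/(4*L^2)) = rexp (L * (1-x))*(2/(9*L^3)-1/(3*L^2)+x/(3*L^2))+rexp (L * (4-4*x))/(36*L^3)-1/(4*L^3) := by
    intro x
    rw [step_aux L (-1/(36*L^3)) (0) (1/(4*L^3)) (-rexp (L * (1-x))/(3*L^2)) (0) (-3) (4-x) (1) (-x) x 1 _ (by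
      intro t
      ring_nf
      try field_simp
      try ring_nf)]
    ring_nf
    try simp only [mul_inv_cancel₀ hL, Real.exp_zero]
    try field_simp
    try ring_nf
    try (simp only [Real.exp_zero]; ring_nf)
  have q4 : ∫ x in (0:ℝ)..1, (rexp (L * (1-x))*(2/(9*L^3)-1/(3*L^2)+x/(3*L^2))+rexp (L * (4-4*x))/(36*L^3)-1/(4*L^3)) = -1/(4*L^3)-9/(16*L^4)+rexp (L * (1))*(5/(9*L^4)-1/(3*L^3))+rexp (L * (4))/(144*L^4) := by
    rw [step_aux L (-2/(9*L^4)+1/(3*L^3)-1/(3*L^4)) (-1/(3*L^3)) (-1/(144*L^4)) (-1/(4*L^3)) (0) (-1) (1) (-4) (4) 0 1 _ (by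
      intro t
      ring_nf
      try field_simp
      try ring_nf)]
    ring_nf
    try simp only [mul_inv_cancel₀ hL, Real.exp_zero]
    try field_simp
    try ring_nf
    try (simp only [Real.exp_zero]; ring_nf)
  simp only [p1, p2, p3, p4] at hK₁
  simp only [q1, q2, q3, q4] at hK₂
  rw [hK₁, hK₂, mul_one, ha', ha4]
  field_simp
  ring
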